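/- Geometry preservation (margin and radius together): in the SVM dual setup with data matrix X ∈ ℝ^{n×d} whose rows are x_1^T,…,x_n^T, let ε ∈ (0,1). Let X = UΣV^T be a compact singular value decomposition of X of rank ρ, and let x_B ∈ ℝ^d and B > 0 satisfy ‖x_i − x_B‖₂ ≤ B for all i; let X_B ∈ ℝ^{(n+1)×d} have rows x_1^T,…,x_n^T, x_B^T with compact singular value decomposition X_B = U_B Σ_B V_B^T of rank ρ_B. Let R ∈ ℝ^{d×r} satisfy ‖I_ρ − V^T R R^T V‖₂ ≤ ε/2 and ‖I_{ρ_B} − V_B^T R R^T V_B‖₂ ≤ ε. Suppose α* ∈ K maximizes f over K, α̃* ∈ K maximizes f̃ over K, the identities Σ_i α*_i = ‖X^T Y α*‖₂² and Σ_i α̃*_i = ‖R^T X^T Y α̃*‖₂² hold, and set w* = X^T Y α* ≠ 0 and w̃* = R^T X^T Y α̃* ≠ 0. Let B̃ = max_{1≤i≤n} ‖R^T x_i − R^T x_B‖₂. Then, with margins γ* = 1/‖w*‖₂ and γ̃* = 1/‖w̃*‖₂, one has B̃²/(γ̃*)² ≤ ((1 + ε)/(1 − ε)) · B²/(γ*)².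 -/

import Mathlib

open Matrix

/-- Euclidean norm of a vector in ℝ^n. -/
noncomputable def euclNorm {n : ℕ} (x : Fin n → ℝ) : ℝ := Real.sqrt (∑ i, x i ^ 2)

/-- Spectral norm (ℓ₂ operator norm) of a real matrix: the supremum of `‖A x‖₂`
over unit vectors `x`. -/
noncomputable def specNorm {m n : ℕ} (A : Matrix (Fin m) (Fin n) ℝ) : ℝ :=
  sSup {c : ℝ | ∃ x : Fin n → ℝ, euclNorm x = 1 ∧ c = euclNorm (A.mulVec x)}

/-- The SVM dual feasible set `K = {α : 0 ≤ αᵢ ≤ C, Σᵢ yᵢαᵢ = 0}`. -/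
def svmFeasible {p : ℕ} (y : Fin p → ℝ) (C : ℝ) (α : Fin p → ℝ) : Prop :=
  (∀ i, 0 ≤ α i ∧ α i ≤ C) ∧ ∑ i, y i * α i = 0

/-- The SVM dual objective `f(α) = Σᵢ αᵢ − (1/2)‖XᵀYα‖₂²`, where `Y = diag(y)`. -/
noncomputable def svmDualObj {p d : ℕ} (X : Matrix (Fin p) (Fin d) ℝ) (y : Fin p → ℝ)
    (α : Fin p → ℝ) : ℝ :=
  ∑ i, α i - (1 / 2) * euclNorm (Xᵀ.mulVec ((Matrix.diagonal y).mulVec α)) ^ 2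

/-- The reduced SVM dual objective `f̃(α) = Σᵢ αᵢ − (1/2)‖RᵀXᵀYα‖₂²`. -/
noncomputable def svmDualObjRed {p d r : ℕ} (X : Matrix (Fin p) (Fin d) ℝ)
    (R : Matrix (Fin d) (Fin r) ℝ) (y : Fin p → ℝ) (α : Fin p → ℝ) : ℝ :=
  ∑ i, α i - (1 / 2) * euclNorm (Rᵀ.mulVec (Xᵀ.mulVec ((Matrix.diagonal y).mulVec α))) ^ 2


lemma euclNorm_eq {n : ℕ} (x : Fin n → ℝ) : euclNorm x = ‖WithLp.toLp 2 x‖ := by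
  simp [euclNorm, EuclideanSpace.norm_eq]

lemma euclNorm_nonneg {n : ℕ} (x : Fin n → ℝ) : 0 ≤ euclNorm x := Real.sqrt_nonneg _

lemma euclNorm_sq {n : ℕ} (x : Fin n → ℝ) : euclNorm x ^ 2 = x ⬝ᵥ x := by
  rw [euclNorm, Real.sq_sqrt (Finset.sum_nonneg fun i _ => sq_nonneg _)]
  simp [dotProduct, sq]

lemma euclNorm_smul {n : ℕ} (c : ℝ) (x : Fin n → ℝ) :
    euclNorm (c • x) = |c| * euclNorm x := by
  simp [euclNorm_eq, WithLp.toLp_smul, norm_smul]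

lemma abs_dot_le {n : ℕ} (x z : Fin n → ℝ) : |x ⬝ᵥ z| ≤ euclNorm x * euclNorm z := by
  have h := abs_real_inner_le_norm (WithLp.toLp 2 z) (WithLp.toLp 2 x)
  rw [EuclideanSpace.inner_toLp_toLp] at h
  simp only [star_trivial] at h
  rw [euclNorm_eq, euclNorm_eq, mul_comm]
  exact h

lemma specNorm_bdd {m n : ℕ} (A : Matrix (Fin m) (Fin n) ℝ) :
    BddAbove {c : ℝ | ∃ x : Fin n → ℝ, euclNorm x = 1 ∧ c = euclNorm (A.mulVec x)} := by
  refine ⟨‖(Matrix.toEuclideanLin A).toContinuousLinearMap‖, ?_⟩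
  rintro c ⟨x, hx, rfl⟩
  have h := (Matrix.toEuclideanLin A).toContinuousLinearMap.le_opNorm (WithLp.toLp 2 x)
  rw [← euclNorm_eq x, hx, mul_one] at h
  rw [euclNorm_eq]
  exact h

lemma mulVec_le {m n : ℕ} (A : Matrix (Fin m) (Fin n) ℝ) (c : ℝ) (h : specNorm A ≤ c)
    (x : Fin n → ℝ) : euclNorm (A.mulVec x) ≤ c * euclNorm x := by
  by_cases hx : euclNorm x = 0
  · have : x = 0 := by
      rw [euclNorm_eq, norm_eq_zero] at hx
      simpa using hx
    subst this
    simp [euclNorm]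
  · have hp : 0 < euclNorm x := lt_of_le_of_ne (euclNorm_nonneg x) (Ne.symm hx)
    have h1 : euclNorm (A.mulVec ((euclNorm x)⁻¹ • x)) ≤ specNorm A := by
      refine le_csSup (specNorm_bdd A) ⟨(euclNorm x)⁻¹ • x, ?_, rfl⟩
      rw [euclNorm_smul, abs_of_pos (inv_pos.2 hp), inv_mul_cancel₀ hx]
    rw [Matrix.mulVec_smul, euclNorm_smul, abs_of_pos (inv_pos.2 hp)] at h1
    have h2 := h1.trans h
    rwa [inv_mul_le_iff₀ hp, mul_comm] at h2

lemma distort {d r k : ℕ} (V : Matrix (Fin d) (Fin k) ℝ) (R : Matrix (Fin d) (Fin r) ℝ) (c : ℝ)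
    (hV : Vᵀ * V = 1) (h : specNorm ((1 : Matrix (Fin k) (Fin k) ℝ) - Vᵀ * R * Rᵀ * V) ≤ c)
    (z : Fin k → ℝ) :
    |euclNorm (V.mulVec z) ^ 2 - euclNorm (Rᵀ.mulVec (V.mulVec z)) ^ 2|
      ≤ c * euclNorm (V.mulVec z) ^ 2 := by
  have e1 : euclNorm (V.mulVec z) ^ 2 = euclNorm z ^ 2 := by
    rw [euclNorm_sq, euclNorm_sq, Matrix.dotProduct_mulVec, ← Matrix.mulVec_transpose,
      Matrix.mulVec_mulVec, hV, Matrix.one_mulVec]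
  have e2 : euclNorm (V.mulVec z) ^ 2 - euclNorm (Rᵀ.mulVec (V.mulVec z)) ^ 2
      = z ⬝ᵥ ((1 - Vᵀ * R * Rᵀ * V).mulVec z) := by
    rw [e1, euclNorm_sq, euclNorm_sq, Matrix.sub_mulVec, dotProduct_sub, Matrix.one_mulVec]
    congr 1
    rw [Matrix.dotProduct_mulVec, ← Matrix.mulVec_transpose, dotProduct_comm]
    simp only [Matrix.mulVec_mulVec, Matrix.transpose_transpose]
    rw [Matrix.dotProduct_mulVec, ← Matrix.mulVec_transpose, dotProduct_comm]
    simp only [Matrix.mulVec_mulVec, Matrix.mul_assoc, Matrix.transpose_mul,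
      Matrix.transpose_transpose]
  rw [e2, e1]
  have h1 := mulVec_le _ c h z
  have h2 := abs_dot_le z ((1 - Vᵀ * R * Rᵀ * V).mulVec z)
  nlinarith [euclNorm_nonneg z]

/-- **Theorem 3 (geometry preservation: margin and radius together).**
In the SVM dual setup with data matrix `X ∈ ℝ^{n×d}` (rows `x_i`), compact SVD
`X = UΣVᵀ` of rank `ρ`, enclosing ball of center `x_B` and radius `B > 0`,
and augmented matrix `X_B` (rows `x_1,…,x_n,x_B`) with compact SVD
`X_B = U_B Σ_B V_Bᵀ` of rank `ρ_B`: if `‖I_ρ − VᵀRRᵀV‖₂ ≤ ε/2` and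
`‖I_{ρ_B} − V_BᵀRRᵀV_B‖₂ ≤ ε`, and `α*`, `α̃*` are dual maximizers satisfying
the optimality identities with `w* = XᵀYα* ≠ 0` and `w̃* = RᵀXᵀYα̃* ≠ 0`, then
with `B̃ = maxᵢ ‖Rᵀx_i − Rᵀx_B‖₂`, `γ* = 1/‖w*‖₂`, `γ̃* = 1/‖w̃*‖₂` one has
`B̃²/(γ̃*)² ≤ ((1+ε)/(1−ε))·B²/(γ*)²`. -/
theorem svm_geometry_preservation
    (n d r ρ ρB : ℕ) (ε : ℝ) (hε : ε ∈ Set.Ioo (0 : ℝ) 1)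
    (x : Fin n → Fin d → ℝ)
    (X : Matrix (Fin n) (Fin d) ℝ) (hXdef : X = Matrix.of x) (hrank : X.rank = ρ)
    (U : Matrix (Fin n) (Fin ρ) ℝ) (S : Matrix (Fin ρ) (Fin ρ) ℝ)
    (V : Matrix (Fin d) (Fin ρ) ℝ)
    (hU : Uᵀ * U = 1) (hV : Vᵀ * V = 1)
    (hS : ∃ σ : Fin ρ → ℝ, (∀ i, 0 < σ i) ∧ S = Matrix.diagonal σ)
    (hX : X = U * S * Vᵀ)
    (xB : Fin d → ℝ) (B : ℝ) (hB : 0 < B)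
    (henc : ∀ i, euclNorm (x i - xB) ≤ B)
    (XB : Matrix (Fin (n + 1)) (Fin d) ℝ) (hXB : XB = Matrix.of (Fin.snoc x xB))
    (hrankB : XB.rank = ρB)
    (UB : Matrix (Fin (n + 1)) (Fin ρB) ℝ) (SB : Matrix (Fin ρB) (Fin ρB) ℝ)
    (VB : Matrix (Fin d) (Fin ρB) ℝ)
    (hUB : UBᵀ * UB = 1) (hVB : VBᵀ * VB = 1)
    (hSB : ∃ σ : Fin ρB → ℝ, (∀ i, 0 < σ i) ∧ SB = Matrix.diagonal σ)
    (hXBsvd : XB = UB * SB * VBᵀ)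
    (R : Matrix (Fin d) (Fin r) ℝ)
    (hE : specNorm ((1 : Matrix (Fin ρ) (Fin ρ) ℝ) - Vᵀ * R * Rᵀ * V) ≤ ε / 2)
    (hEB : specNorm ((1 : Matrix (Fin ρB) (Fin ρB) ℝ) - VBᵀ * R * Rᵀ * VB) ≤ ε)
    (y : Fin n → ℝ) (hy : ∀ i, y i = 1 ∨ y i = -1)
    (C : ℝ) (hC : 0 < C)
    (αs : Fin n → ℝ) (hαs : svmFeasible y C αs)
    (hαsmax : ∀ β, svmFeasible y C β → svmDualObj X y β ≤ svmDualObj X y αs)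
    (hid1 : ∑ i, αs i = euclNorm (Xᵀ.mulVec ((Matrix.diagonal y).mulVec αs)) ^ 2)
    (αt : Fin n → ℝ) (hαt : svmFeasible y C αt)
    (hαtmax : ∀ β, svmFeasible y C β → svmDualObjRed X R y β ≤ svmDualObjRed X R y αt)
    (hid2 : ∑ i, αt i
      = euclNorm (Rᵀ.mulVec (Xᵀ.mulVec ((Matrix.diagonal y).mulVec αt))) ^ 2)
    (hw : Xᵀ.mulVec ((Matrix.diagonal y).mulVec αs) ≠ 0)
    (hwt : Rᵀ.mulVec (Xᵀ.mulVec ((Matrix.diagonal y).mulVec αt)) ≠ 0) :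
    (⨆ i : Fin n, euclNorm (Rᵀ.mulVec (x i) - Rᵀ.mulVec xB)) ^ 2
        / (1 / euclNorm (Rᵀ.mulVec (Xᵀ.mulVec ((Matrix.diagonal y).mulVec αt)))) ^ 2
      ≤ ((1 + ε) / (1 - ε))
          * (B ^ 2 / (1 / euclNorm (Xᵀ.mulVec ((Matrix.diagonal y).mulVec αs))) ^ 2) := by
  obtain ⟨he0, he1⟩ := hε
  have hcol : ∀ u, ∃ z, Xᵀ.mulVec u = V.mulVec z := fun u =>
    ⟨(U * S)ᵀ.mulVec u, by rw [hX, Matrix.transpose_mul, Matrix.mulVec_mulVec,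
      Matrix.transpose_transpose]⟩
  have hcolB : ∀ u, ∃ z, XBᵀ.mulVec u = VB.mulVec z := fun u =>
    ⟨(UB * SB)ᵀ.mulVec u, by rw [hXBsvd, Matrix.transpose_mul, Matrix.mulVec_mulVec,
      Matrix.transpose_transpose]⟩
  have hrad : ∀ i, euclNorm (Rᵀ.mulVec (x i) - Rᵀ.mulVec xB) ≤ Real.sqrt (1 + ε) * B := by
    intro i
    obtain ⟨z, hz⟩ := hcolB (Pi.single i.castSucc 1 - Pi.single (Fin.last n) 1)
    have hz' : x i - xB = VB.mulVec z := by
      rw [← hz, Matrix.mulVec_sub, hXB]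
      ext j
      simp
    have h := distort VB R ε hVB hEB z
    rw [← hz', Matrix.mulVec_sub] at h
    have h1 := (abs_le.1 h).1
    have h2 := henc i
    have h3 := euclNorm_nonneg (x i - xB)
    have h4 : euclNorm (x i - xB) ^ 2 ≤ B ^ 2 := by gcongr
    apply le_of_sq_le_sq _ (by positivity)
    rw [mul_pow, Real.sq_sqrt (by linarith)]
    nlinarith
  have hsup0 : 0 ≤ ⨆ i : Fin n, euclNorm (Rᵀ.mulVec (x i) - Rᵀ.mulVec xB) :=
    Real.iSup_nonneg fun i => euclNorm_nonneg _
  have hsup : (⨆ i : Fin n, euclNorm (Rᵀ.mulVec (x i) - Rᵀ.mulVec xB)) ^ 2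
      ≤ (1 + ε) * B ^ 2 := by
    have h : (⨆ i : Fin n, euclNorm (Rᵀ.mulVec (x i) - Rᵀ.mulVec xB))
      ≤ Real.sqrt (1 + ε) * B := Real.iSup_le hrad (by positivity)
    calc _ ≤ (Real.sqrt (1 + ε) * B) ^ 2 := by gcongr
      _ = _ := by rw [mul_pow, Real.sq_sqrt (by linarith)]
  obtain ⟨z, hz⟩ := hcol ((Matrix.diagonal y).mulVec αt)
  have hd := (abs_le.1 (distort V R (ε / 2) hV hE z)).2
  have hm := hαsmax αt hαt
  unfold svmDualObj at hm
  rw [← hz] at hd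
  rw [hid1, hid2] at hm
  have hmargin : (1 - ε) * euclNorm (Rᵀ.mulVec (Xᵀ.mulVec ((Matrix.diagonal y).mulVec αt))) ^ 2
      ≤ euclNorm (Xᵀ.mulVec ((Matrix.diagonal y).mulVec αs)) ^ 2 := by
    generalize euclNorm (Rᵀ.mulVec (Xᵀ.mulVec ((Matrix.diagonal y).mulVec αt))) ^ 2 = qt at *
    have hs0 := sq_nonneg (euclNorm (Xᵀ.mulVec ((Matrix.diagonal y).mulVec αs)))
    have hq0 := sq_nonneg (euclNorm (Xᵀ.mulVec ((Matrix.diagonal y).mulVec αt)))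
    generalize euclNorm (Xᵀ.mulVec ((Matrix.diagonal y).mulVec αs)) ^ 2 = s at *
    generalize euclNorm (Xᵀ.mulVec ((Matrix.diagonal y).mulVec αt)) ^ 2 = q at *
    have h1 : (1 - ε / 2) * q ≤ qt := by linarith
    have h2 : 2 * qt - q ≤ s := by linarith
    nlinarith
  simp only [one_div, inv_pow, div_inv_eq_mul]
  rw [div_mul_eq_mul_div, le_div_iff₀ (by linarith)]
  calc _ = (⨆ i : Fin n, euclNorm (Rᵀ.mulVec (x i) - Rᵀ.mulVec xB)) ^ 2 * ((1 - ε) *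
        euclNorm (Rᵀ.mulVec (Xᵀ.mulVec ((Matrix.diagonal y).mulVec αt))) ^ 2) := by ring
    _ ≤ ((1 + ε) * B ^ 2) * euclNorm (Xᵀ.mulVec ((Matrix.diagonal y).mulVec αs)) ^ 2 := by
        apply mul_le_mul hsup hmargin
        · exact mul_nonneg (by linarith) (sq_nonneg _)
        · positivity
    _ = _ := by ring
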